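/- For every δ > 0 and every ε > 0 there exists δ₁ > 0 with the following property: for every unital C*-algebra A and all B, C ∈ A with ‖B‖ ≤ 1, 0 ≤ C ≤ 1, ‖BC − C‖ ≤ δ₁ and ‖CB − C‖ ≤ δ₁, one has ‖B·f_δ(C) − f_δ(C)‖ ≤ ε and ‖f_δ(C)·B − f_δ(C)‖ ≤ ε. -/

import Mathlib

/-!
The functional calculus turns a pointwise bound `‖f‖ ≤ ‖g‖` on the spectrum of `a` into the
operator inequality `f(a)⋆ f(a) ≤ g(a)⋆ g(a)`, hence, by the C⋆-identity, into
`‖f(a) x‖ ≤ ‖g(a) x‖` for every `x`; dually, `‖x f(a)‖ ≤ ‖x g(a)‖`. Since `|f_δ(t)| ≤ |δ⁻¹ t|`,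
taking `x = B - 1` shows that multiplication by `B` moves `f_δ(C)` at most `δ⁻¹` times as far as it
moves `C`, so `δ₁ = δ ε` works.
-/

lemma norm_mul_le_norm_mul_of_star_mul_self_le {A : Type*} [NonUnitalCStarAlgebra A]
    [PartialOrder A] [StarOrderedRing A] {a b : A} (h : star a * a ≤ star b * b) (x : A) :
    ‖a * x‖ ≤ ‖b * x‖ := by
  have star_mul_mul (c : A) : star x * (star c * c) * x = star (c * x) * (c * x) := by
    simp only [star_mul, mul_assoc]
  have hconj : star (a * x) * (a * x) ≤ star (b * x) * (b * x) := by
    simpa only [star_mul_mul] using star_left_conjugate_le_conjugate h x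
  have hnorm : ‖a * x‖ * ‖a * x‖ ≤ ‖b * x‖ * ‖b * x‖ := by
    simpa only [CStarRing.norm_star_mul_self] using
      CStarAlgebra.norm_le_norm_of_nonneg_of_le (star_mul_self_nonneg (a * x)) hconj
  exact (mul_self_le_mul_self_iff (norm_nonneg _) (norm_nonneg _)).2 hnorm

section ContinuousFunctionalCalculus

variable {𝕜 A : Type*} [RCLike 𝕜]

lemma star_cfc_mul_cfc_le_of_norm_le [Ring A] [StarRing A] [TopologicalSpace A] [Algebra 𝕜 A]
    [PartialOrder A] [StarOrderedRing A] {p : A → Prop} [ContinuousFunctionalCalculus 𝕜 A p]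
    {a : A} {f g : 𝕜 → 𝕜}
    (hf : ContinuousOn f (spectrum 𝕜 a)) (hg : ContinuousOn g (spectrum 𝕜 a))
    (hfg : ∀ t ∈ spectrum 𝕜 a, ‖f t‖ ≤ ‖g t‖) :
    star (cfc f a) * cfc f a ≤ star (cfc g a) * cfc g a := by
  -- `|g|² = |f|² + |h|²`, so the two sides differ by `h(a)⋆ h(a)`.
  let h : 𝕜 → 𝕜 := fun t ↦ (√(‖g t‖ ^ 2 - ‖f t‖ ^ 2) : ℝ)
  have hh : ContinuousOn h (spectrum 𝕜 a) :=
    RCLike.continuous_ofReal.comp_continuousOn ((hg.norm.pow 2).sub (hf.norm.pow 2)).sqrt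
  have star_mul_cfc {k : 𝕜 → 𝕜} (hk : ContinuousOn k (spectrum 𝕜 a)) :
      star (cfc k a) * cfc k a = cfc (fun t ↦ star (k t) * k t) a := by
    rw [cfc_mul (fun t ↦ star (k t)) k a hk.star hk, cfc_star]
  have pythagoras : (spectrum 𝕜 a).EqOn (fun t ↦ star (g t) * g t)
      (fun t ↦ star (f t) * f t + star (h t) * h t) := fun t ht ↦ by
    have hsq : 0 ≤ ‖g t‖ ^ 2 - ‖f t‖ ^ 2 :=
      sub_nonneg.2 (pow_le_pow_left₀ (norm_nonneg _) (hfg t ht) 2)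
    simp only [h, RCLike.star_def, RCLike.conj_mul, RCLike.norm_ofReal, sq_abs,
      ← RCLike.ofReal_pow, ← RCLike.ofReal_add, Real.sq_sqrt hsq, add_sub_cancel]
  calc star (cfc f a) * cfc f a
      ≤ star (cfc f a) * cfc f a + star (cfc h a) * cfc h a :=
        le_add_of_nonneg_right (star_mul_self_nonneg _)
    _ = star (cfc g a) * cfc g a := by
      rw [star_mul_cfc hf, star_mul_cfc hh, star_mul_cfc hg, cfc_congr pythagoras,
        cfc_add a (fun t ↦ star (f t) * f t) (fun t ↦ star (h t) * h t) (hf.star.mul hf)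
          (hh.star.mul hh)]

variable [CStarAlgebra A] [Algebra 𝕜 A] {p : A → Prop} [ContinuousFunctionalCalculus 𝕜 A p]
  {a : A} {f g : 𝕜 → 𝕜}

lemma norm_cfc_mul_le_norm_cfc_mul
    (hf : ContinuousOn f (spectrum 𝕜 a)) (hg : ContinuousOn g (spectrum 𝕜 a))
    (hfg : ∀ t ∈ spectrum 𝕜 a, ‖f t‖ ≤ ‖g t‖) (x : A) :
    ‖cfc f a * x‖ ≤ ‖cfc g a * x‖ := by
  let _ := CStarAlgebra.spectralOrder A
  let _ := CStarAlgebra.spectralOrderedRing A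
  exact norm_mul_le_norm_mul_of_star_mul_self_le (star_cfc_mul_cfc_le_of_norm_le hf hg hfg) x

lemma norm_mul_cfc_le_norm_mul_cfc
    (hf : ContinuousOn f (spectrum 𝕜 a)) (hg : ContinuousOn g (spectrum 𝕜 a))
    (hfg : ∀ t ∈ spectrum 𝕜 a, ‖f t‖ ≤ ‖g t‖) (x : A) :
    ‖x * cfc f a‖ ≤ ‖x * cfc g a‖ := by
  have norm_mul_cfc (k : 𝕜 → 𝕜) : ‖x * cfc k a‖ = ‖cfc (fun t ↦ star (k t)) a * star x‖ := by
    rw [cfc_star, ← star_mul, norm_star]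
  simpa only [norm_mul_cfc] using
    norm_cfc_mul_le_norm_cfc_mul hf.star hg.star (by simpa only [norm_star] using hfg) (star x)

variable [NormSMulClass 𝕜 A] {r : 𝕜}

lemma norm_cfc_mul_sub_cfc_le (ha : p a) (hf : ContinuousOn f (spectrum 𝕜 a))
    (hfr : ∀ t ∈ spectrum 𝕜 a, ‖f t‖ ≤ ‖r * t‖) (b : A) :
    ‖cfc f a * b - cfc f a‖ ≤ ‖r‖ * ‖a * b - a‖ := by
  have hbound := norm_cfc_mul_le_norm_cfc_mul hf (continuous_const_mul r).continuousOn hfr (b - 1)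
  rwa [cfc_const_mul_id r a ha, smul_mul_assoc, norm_smul, mul_sub_one, mul_sub_one] at hbound

lemma norm_mul_cfc_sub_cfc_le (ha : p a) (hf : ContinuousOn f (spectrum 𝕜 a))
    (hfr : ∀ t ∈ spectrum 𝕜 a, ‖f t‖ ≤ ‖r * t‖) (b : A) :
    ‖b * cfc f a - cfc f a‖ ≤ ‖r‖ * ‖b * a - a‖ := by
  have hbound := norm_mul_cfc_le_norm_mul_cfc hf (continuous_const_mul r).continuousOn hfr (b - 1)
  rwa [cfc_const_mul_id r a ha, mul_smul_comm, norm_smul, sub_one_mul, sub_one_mul] at hbound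

end ContinuousFunctionalCalculus

lemma abs_min_one_le (u : ℝ) : |min u 1| ≤ |u| := by
  rcases le_total u 1 with h | h
  · rw [min_eq_left h]
  · rw [min_eq_right h, abs_one]
    exact h.trans (le_abs_self u)

theorem almost_commuting_with_fdelta_general {A : Type*} [CStarAlgebra A] {δ : ℝ} (hδ : 0 < δ)
    (B : A) {C : A} (hC : IsSelfAdjoint C) :
    ‖B * cfc (fun t : ℝ ↦ min (t / δ) 1) C - cfc (fun t : ℝ ↦ min (t / δ) 1) C‖ ≤
        δ⁻¹ * ‖B * C - C‖ ∧
      ‖cfc (fun t : ℝ ↦ min (t / δ) 1) C * B - cfc (fun t : ℝ ↦ min (t / δ) 1) C‖ ≤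
        δ⁻¹ * ‖C * B - C‖ := by
  have hf : ContinuousOn (fun t : ℝ ↦ min (t / δ) 1) (spectrum ℝ C) := by fun_prop
  have hfδ (t : ℝ) (_ : t ∈ spectrum ℝ C) : ‖min (t / δ) 1‖ ≤ ‖δ⁻¹ * t‖ := by
    rw [inv_mul_eq_div]
    exact abs_min_one_le (t / δ)
  rw [← Real.norm_of_nonneg (inv_nonneg.2 hδ.le)]
  exact ⟨norm_mul_cfc_sub_cfc_le hC hf hfδ B, norm_cfc_mul_sub_cfc_le hC hf hfδ B⟩

/-- For every `δ > 0` and `ε > 0` there exists `δ₁ > 0` such that in any unital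
C*-algebra `A`, whenever `‖B‖ ≤ 1`, `0 ≤ C ≤ 1`, `‖BC − C‖ ≤ δ₁` and `‖CB − C‖ ≤ δ₁`, one has
`‖B f_δ(C) − f_δ(C)‖ ≤ ε` and `‖f_δ(C) B − f_δ(C)‖ ≤ ε`, where `f_δ(t) = min (t/δ) 1` is applied
to `C` via continuous functional calculus. -/
theorem almost_commuting_with_fdelta
    (δ ε : ℝ) (hδ : 0 < δ) (hε : 0 < ε) :
    ∃ δ₁ > (0 : ℝ),
      ∀ (A : Type) [CStarAlgebra A] [PartialOrder A] [StarOrderedRing A],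
        ∀ B C : A, ‖B‖ ≤ 1 → 0 ≤ C → C ≤ 1 →
          ‖B * C - C‖ ≤ δ₁ → ‖C * B - C‖ ≤ δ₁ →
          ‖B * cfc (fun t : ℝ => min (t / δ) 1) C - cfc (fun t : ℝ => min (t / δ) 1) C‖ ≤ ε ∧
          ‖cfc (fun t : ℝ => min (t / δ) 1) C * B - cfc (fun t : ℝ => min (t / δ) 1) C‖ ≤ ε := by
  refine ⟨δ * ε, mul_pos hδ hε, fun A _ _ _ B C _ hC _ hBC hCB ↦ ?_⟩
  exact (almost_commuting_with_fdelta_general hδ B (.of_nonneg hC)).imp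
    (·.trans ((inv_mul_le_iff₀ hδ).2 hBC)) (·.trans ((inv_mul_le_iff₀ hδ).2 hCB))
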